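/- arXiv:1305.0353 — 2 statements merged into one kernel-verified Lean document; each statement's English description precedes it below -/
import Mathlib

section
/- For every n ≥ 1 and a > 0, the spectral gaps of the Metropolis chains satisfy 1/(8 η_{−a}(1,n) η_a(2,n+1)) ≤ λ̌_{n,a} ≤ 2/(η_{−a}(1,n) η_a(2,n+1)) and 1/(64 η_a(1,⌈n/2⌉) η_{−a}(⌈n/2⌉,n)) ≤ λ̂_{n,a} ≤ 1/(2 η_a(1,⌈n/2⌉) η_{−a}(⌈n/2⌉,n)), where η_a(k,l) = Σ_{i=k}^{l} i^a. -/
open Finset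

/-- `η_a(k,l) = Σ_{i=k}^l i^a`. -/
noncomputable def eta (a : ℝ) (k l : ℕ) : ℝ :=
  ∑ i ∈ Finset.Icc k l, (i : ℝ) ^ a

/-- The Metropolis chain `Ǩ_{n,a}` for `π̌_{n,a}(i) ∝ (|i|+1)^a`, described for
non-negative states `i ≥ 0` (the general entry is obtained by the symmetry
`K(i,j) = K(−i,−j)`). -/
noncomputable def checkKpos (n : ℕ) (a : ℝ) (i j : ℤ) : ℝ :=
  if j = i + 1 ∧ i < (n : ℤ) then 1 / 2
  else if j = i - 1 ∧ 1 ≤ i ∧ i ≤ (n : ℤ) then (i : ℝ) ^ a / (2 * ((i : ℝ) + 1) ^ a)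
  else if i = 0 ∧ j = -1 then 1 / 2
  else if j = i ∧ i = (n : ℤ) then 1 - (n : ℝ) ^ a / (2 * ((n : ℝ) + 1) ^ a)
  else if j = i ∧ 1 ≤ i then (((i : ℝ) + 1) ^ a - (i : ℝ) ^ a) / (2 * ((i : ℝ) + 1) ^ a)
  else 0

/-- The full kernel `Ǩ_{n,a}` on `ℤ`, using the symmetry `K(i,j) = K(−i,−j)`. -/
noncomputable def checkK (n : ℕ) (a : ℝ) (i j : ℤ) : ℝ :=
  if 0 ≤ i then checkKpos n a i j else checkKpos n a (-i) (-j)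

/-- The Metropolis chain `K̂_{n,a}` for `π̂_{n,a}(i) ∝ (n−|i|+1)^a`, described for
non-negative states `i ≥ 0`. -/
noncomputable def hatKpos (n : ℕ) (a : ℝ) (i j : ℤ) : ℝ :=
  if j = i - 1 ∧ 1 ≤ i ∧ i ≤ (n : ℤ) then 1 / 2
  else if j = i + 1 ∧ 0 ≤ i ∧ i < (n : ℤ) then
    ((n : ℝ) - (i : ℝ)) ^ a / (2 * ((n : ℝ) - (i : ℝ) + 1) ^ a)
  else if i = 0 ∧ j = -1 then (n : ℝ) ^ a / (2 * ((n : ℝ) + 1) ^ a)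
  else if j = i ∧ i = 0 then 1 - (n : ℝ) ^ a / ((n : ℝ) + 1) ^ a
  else if j = i ∧ 1 ≤ i then
    (((n : ℝ) - (i : ℝ) + 1) ^ a - ((n : ℝ) - (i : ℝ)) ^ a) /
      (2 * ((n : ℝ) - (i : ℝ) + 1) ^ a)
  else 0

/-- The full kernel `K̂_{n,a}` on `ℤ`, using the symmetry `K(i,j) = K(−i,−j)`. -/
noncomputable def hatK (n : ℕ) (a : ℝ) (i j : ℤ) : ℝ :=
  if 0 ≤ i then hatKpos n a i j else hatKpos n a (-i) (-j)

/-- The matrix of `Ǩ_{n,a}` on the `2n+1` states `{0, ±1, …, ±n}`, the state of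
index `i ∈ {0,…,2n}` being `i − n ∈ {−n,…,n}`. -/
noncomputable def checkMat (n : ℕ) (a : ℝ) :
    Matrix (Fin (2 * n + 1)) (Fin (2 * n + 1)) ℝ :=
  Matrix.of fun i j => checkK n a (((i : ℕ) : ℤ) - (n : ℤ)) (((j : ℕ) : ℤ) - (n : ℤ))

/-- The matrix of `K̂_{n,a}` on the `2n+1` states `{0, ±1, …, ±n}`. -/
noncomputable def hatMat (n : ℕ) (a : ℝ) :
    Matrix (Fin (2 * n + 1)) (Fin (2 * n + 1)) ℝ :=
  Matrix.of fun i j => hatK n a (((i : ℕ) : ℤ) - (n : ℤ)) (((j : ℕ) : ℤ) - (n : ℤ))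

/-- `gap` is the spectral gap of the chain `K`: the smallest non-zero eigenvalue of
`I − K`. -/
def IsGapOf {m : ℕ} (K : Matrix (Fin (m + 1)) (Fin (m + 1)) ℝ) (gap : ℝ) : Prop :=
  IsLeast {μ : ℝ | μ ≠ 0 ∧ ∃ v : Fin (m + 1) → ℝ, v ≠ 0 ∧
    (1 - K).mulVec v = μ • v} gap


lemma g18_phi_sum (φ u : ℕ → ℝ) (h0 : φ 0 = 0) (hs : ∀ j, φ (j+1) = φ j + u (j+1)) (n : ℕ)
    (hu : ∀ j, 1 ≤ j → j ≤ n → 0 < u j) :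
    ∀ x, x ≤ n → 0 ≤ φ x ∧ ∑ j ∈ Icc 1 x, u j / √(φ j) ≤ 2 * √(φ x) := by
  intro x
  induction x with
  | zero => intro _; simp [h0]
  | succ x ih =>
    intro hx
    obtain ⟨h1, h2⟩ := ih (by omega)
    have hpos := hu (x+1) (by omega) hx
    have h3 : 0 < φ (x+1) := by rw [hs]; linarith
    refine ⟨h3.le, ?_⟩
    rw [Finset.sum_Icc_succ_top (by omega)]
    have s1 : 0 < √(φ (x+1)) := Real.sqrt_pos.2 h3
    have e1 := Real.sq_sqrt h3.le
    have e0 := Real.sq_sqrt h1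
    have : u (x+1) / √(φ (x+1)) ≤ 2 * (√(φ (x+1)) - √(φ x)) := by
      rw [div_le_iff₀ s1]
      have := hs x
      nlinarith [sq_nonneg (√(φ (x+1)) - √(φ x))]
    linarith

lemma g18_hardy (n : ℕ) (p w g : ℕ → ℝ) (hp : ∀ d, 1 ≤ d → d ≤ n → 0 < p d)
    (hw : ∀ d, 1 ≤ d → d ≤ n → 0 < w d) (B : ℝ)
    (hB : ∀ k, 1 ≤ k → k ≤ n → (∑ j ∈ Icc 1 k, 1 / w j) * (∑ d ∈ Icc k n, p d) ≤ B)
    (g0 : g 0 = 0) :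
    ∑ d ∈ Icc 1 n, p d * g d ^ 2 ≤ 4 * B * ∑ d ∈ Icc 1 n, w d * (g d - g (d-1)) ^ 2 := by
  set φ : ℕ → ℝ := fun k => ∑ j ∈ Icc 1 k, 1 / w j with hφ
  set P : ℕ → ℝ := fun k => ∑ d ∈ Icc k n, p d with hP
  have hφpos : ∀ k, 1 ≤ k → k ≤ n → 0 < φ k := fun k h1 h2 =>
    Finset.sum_pos (fun j hj => by
      rw [mem_Icc] at hj; exact one_div_pos.2 (hw j hj.1 (by omega))) ⟨1, by simp [h1]⟩
  have hPpos : ∀ k, 1 ≤ k → k ≤ n → 0 < P k := fun k h1 h2 =>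
    Finset.sum_pos (fun j hj => by
      rw [mem_Icc] at hj; exact (hp j (by omega) (by omega))) ⟨k, by simp [h2]⟩
  have hS : ∀ x, x ≤ n → ∑ j ∈ Icc 1 x, (1 / w j) / √(φ j) ≤ 2 * √(φ x) := fun x hx =>
    (g18_phi_sum φ (fun j => 1 / w j) (by simp [hφ])
      (fun j => by simp only [hφ]; rw [Finset.sum_Icc_succ_top (by omega)]) n
      (fun j h1 h2 => one_div_pos.2 (hw j h1 h2)) x hx).2
  have hT : ∀ i, i + 1 ≤ n → ∑ x ∈ Icc (n - i) n, p x / √(P x) ≤ 2 * √(P (n - i)) := by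
    intro i
    induction i with
    | zero =>
      intro h
      have h1 := hp n (by omega) le_rfl
      simp only [hP, Nat.sub_zero, Icc_self, sum_singleton]
      rw [Real.div_sqrt]
      linarith [Real.sqrt_nonneg (p n)]
    | succ i ih =>
      intro h
      have ih := ih (by omega)
      have e : n - i = n - (i+1) + 1 := by omega
      set k := n - (i+1) with hk
      rw [e] at ih
      have hk1 : 1 ≤ k := by omega
      have hkn : k + 1 ≤ n := by omega
      have hI : Icc k n = insert k (Icc (k+1) n) := by
        ext y; simp only [mem_Icc, mem_insert]; omega
      have hPk : P k = p k + P (k+1) := by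
        simp only [hP]; rw [hI, sum_insert (by simp)]
      rw [hI, sum_insert (by simp)]
      have h3 := hPpos k hk1 (by omega)
      have h4 := hPpos (k+1) (by omega) hkn
      have s1 := Real.sqrt_pos.2 h3
      have e1 := Real.sq_sqrt h3.le
      have e0 := Real.sq_sqrt h4.le
      have : p k / √(P k) ≤ 2 * (√(P k) - √(P (k+1))) := by
        rw [div_le_iff₀ s1]
        nlinarith [sq_nonneg (√(P k) - √(P (k+1)))]
      linarith
  have hT' : ∀ j, 1 ≤ j → j ≤ n → ∑ x ∈ Icc j n, p x / √(P x) ≤ 2 * √(P j) := by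
    intro j h1 h2
    have := hT (n - j) (by omega)
    rwa [show n - (n - j) = j by omega] at this
  have hB0 : 1 ≤ n → 0 ≤ B := fun h =>
    le_trans (mul_nonneg (hφpos 1 le_rfl h).le (hPpos 1 le_rfl h).le) (hB 1 le_rfl h)
  have hst : ∀ k, 1 ≤ k → k ≤ n → √(φ k) * √(P k) ≤ √B := by
    intro k h1 h2
    rw [← Real.sqrt_mul (hφpos k h1 h2).le]
    exact Real.sqrt_le_sqrt (hB k h1 h2)
  have htel : ∀ x, g x = ∑ j ∈ Icc 1 x, (g j - g (j-1)) := by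
    intro x
    induction x with
    | zero => simp [g0]
    | succ x ih => rw [Finset.sum_Icc_succ_top (by omega), ← ih]; simp
  have hpt : ∀ x ∈ Icc 1 n, p x * g x ^ 2 ≤
      ∑ j ∈ Icc 1 x, (2 * √B * (p x / √(P x))) * (w j * √(φ j) * (g j - g (j-1)) ^ 2) := by
    intro x hx
    rw [mem_Icc] at hx
    have hcs : g x ^ 2 ≤ (∑ j ∈ Icc 1 x, w j * √(φ j) * (g j - g (j-1)) ^ 2) *
        ∑ j ∈ Icc 1 x, (1 / w j) / √(φ j) := by
      rw [htel x]
      apply Finset.sum_sq_le_sum_mul_sum_of_sq_le_mul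
      · intro j hj
        rw [mem_Icc] at hj
        have := hw j hj.1 (by omega)
        positivity
      · intro j hj
        rw [mem_Icc] at hj
        have := hw j hj.1 (by omega)
        positivity
      · intro j hj
        rw [mem_Icc] at hj
        have := hw j hj.1 (by omega)
        have := Real.sqrt_pos.2 (hφpos j hj.1 (by omega))
        exact le_of_eq (by field_simp)
    rw [← Finset.mul_sum]
    set Q := ∑ j ∈ Icc 1 x, w j * √(φ j) * (g j - g (j-1)) ^ 2 with hQ
    have hQ0 : 0 ≤ Q := Finset.sum_nonneg fun j hj => by
        rw [mem_Icc] at hj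
        have := hw j hj.1 (by omega)
        positivity
    have hpx := hp x hx.1 hx.2
    have ht := Real.sqrt_pos.2 (hPpos x hx.1 hx.2)
    have h1 : g x ^ 2 ≤ Q * (2 * √(φ x)) := hcs.trans (mul_le_mul_of_nonneg_left (hS x hx.2) hQ0)
    have h2 : √(φ x) ≤ √B / √(P x) := by
      rw [le_div_iff₀ ht]; exact hst x hx.1 hx.2
    calc p x * g x ^ 2 ≤ p x * (Q * (2 * (√B / √(P x)))) := by gcongr; exact h1.trans (by gcongr)
      _ = _ := by ring
  calc _ ≤ ∑ x ∈ Icc 1 n, ∑ j ∈ Icc 1 x,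
        (2 * √B * (p x / √(P x))) * (w j * √(φ j) * (g j - g (j-1)) ^ 2) := Finset.sum_le_sum hpt
    _ = ∑ j ∈ Icc 1 n, ∑ x ∈ Icc j n,
        (2 * √B * (p x / √(P x))) * (w j * √(φ j) * (g j - g (j-1)) ^ 2) := by
        apply Finset.sum_comm'
        intro x y; simp only [mem_Icc]; omega
    _ ≤ ∑ j ∈ Icc 1 n, 4 * B * (w j * (g j - g (j-1)) ^ 2) := by
        apply Finset.sum_le_sum
        intro j hj
        rw [mem_Icc] at hj
        rw [← Finset.sum_mul, ← Finset.mul_sum]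
        have hwj := hw j hj.1 hj.2
        have hb : √B * √B = B := Real.mul_self_sqrt (hB0 (by omega))
        calc _ ≤ 2 * √B * (2 * √(P j)) * (w j * √(φ j) * (g j - g (j-1)) ^ 2) := by
              gcongr; exact hT' j hj.1 hj.2
          _ = 4 * √B * (w j * (g j - g (j-1)) ^ 2) * (√(φ j) * √(P j)) := by ring
          _ ≤ 4 * √B * (w j * (g j - g (j-1)) ^ 2) * √B := by
              gcongr; exact hst j hj.1 hj.2
          _ = 4 * (√B * √B) * (w j * (g j - g (j-1)) ^ 2) := by ring
          _ = _ := by rw [hb]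
    _ = _ := by rw [Finset.mul_sum]

lemma g18_div_two (F G : ℕ → ℝ) (N M : ℕ) (h : ∀ i, i ≤ N → F i ≤ G (i / 2))
   (hG : ∀ i, i ≤ M → 0 ≤ G i) (hNM : N / 2 ≤ M) :
   ∑ i ∈ range (N+1), F i ≤ 2 * ∑ i ∈ range (M+1), G i := by
  calc _ ≤ ∑ i ∈ range (N+1), G (i/2) := sum_le_sum fun i hi => h i (by simp at hi; omega)
    _ ≤ ∑ i ∈ range (2*(M+1)), G (i/2) := by
        apply sum_le_sum_of_subset_of_nonneg
        · intro i; simp only [mem_range]; omega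
        · intro i hi _; simp only [mem_range] at hi; exact hG _ (by omega)
    _ = _ := by
        generalize M + 1 = K
        induction K with
        | zero => simp
        | succ K ih =>
          rw [show 2 * (K+1) = 2*K+1+1 by ring, sum_range_succ, sum_range_succ, ih,
            sum_range_succ, show (2*K+1)/2 = K by omega, show 2*K/2 = K by omega]; ring

lemma g18_rayleigh {m : ℕ} (K : Matrix (Fin (m + 1)) (Fin (m + 1)) ℝ) (q : Fin (m+1) → ℝ)
    (hq : ∀ i, 0 < q i) (hsym : ∀ i j, q i * (1 - K) i j = q j * (1 - K) j i)
    (hker : ∀ v, (1 - K).mulVec v = 0 → ∃ c, ∀ i, v i = c)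
    (gap : ℝ) (hg : IsGapOf K gap) (f : Fin (m+1) → ℝ) (hf : ∑ i, q i * f i = 0) :
    gap * ∑ i, q i * f i ^ 2 ≤ ∑ i, q i * (f i * (1 - K).mulVec f i) := by
  set L := 1 - K with hL
  set A : Matrix (Fin (m+1)) (Fin (m+1)) ℝ :=
    Matrix.of fun i j => √(q i) * L i j / √(q j) with hA
  have hs : ∀ i, 0 < √(q i) := fun i => Real.sqrt_pos.2 (hq i)
  have hss : ∀ i, √(q i) * √(q i) = q i := fun i => Real.mul_self_sqrt (hq i).le
  have hAe : ∀ i j, A i j = √(q i) * L i j / √(q j) := fun i j => rfl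
  have hH : A.IsHermitian := by
    ext i j
    simp only [Matrix.conjTranspose_apply, star_trivial, hAe]
    rw [div_eq_div_iff (hs _).ne' (hs _).ne']
    linear_combination hsym j i + L j i * hss j - L i j * hss i
  have hAv : ∀ v : Fin (m+1) → ℝ, ∀ i,
      A.mulVec v i = √(q i) * L.mulVec (fun j => v j / √(q j)) i := by
    intro v i
    simp only [Matrix.mulVec, dotProduct, hAe, Finset.mul_sum]
    refine Finset.sum_congr rfl fun j _ => ?_
    ring
  set b := hH.eigenvectorBasis with hb
  set lam := hH.eigenvalues with hlam
  have hev : ∀ k, A.mulVec (b k : Fin (m+1) → ℝ) = lam k • (b k : Fin (m+1) → ℝ) :=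
    fun k => hH.mulVec_eigenvectorBasis k
  set F : EuclideanSpace ℝ (Fin (m+1)) := WithLp.toLp 2 (fun i => √(q i) * f i) with hF
  set AF : EuclideanSpace ℝ (Fin (m+1)) := WithLp.toLp 2 (A.mulVec (fun i => √(q i) * f i)) with hAF
  have inn : ∀ x y : EuclideanSpace ℝ (Fin (m+1)), inner ℝ x y = ∑ i, x i * y i := by
    intro x y
    rw [PiLp.inner_apply]
    refine Finset.sum_congr rfl fun i _ => ?_
    simp [mul_comm]
  have hkAF : ∀ k, inner ℝ (b k) AF = lam k * inner ℝ (b k) F := by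
    intro k
    rw [inn, inn]
    have h1 : ∑ i, (b k) i * AF i = ∑ i, A.mulVec (b k : Fin (m+1) → ℝ) i * F i := by
      simp only [hAF, hF, Matrix.mulVec, dotProduct, Finset.mul_sum, Finset.sum_mul]
      rw [Finset.sum_comm]
      refine Finset.sum_congr rfl fun i _ => Finset.sum_congr rfl fun j _ => ?_
      have := hH.apply i j
      simp only [star_trivial] at this
      rw [this]; ring
    rw [h1, hev, Finset.mul_sum]
    refine Finset.sum_congr rfl fun i _ => ?_
    simp [mul_assoc]
  have hE : ∑ i, q i * (f i * L.mulVec f i) = inner ℝ F AF := by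
    rw [inn]
    refine Finset.sum_congr rfl fun i _ => ?_
    simp only [hAF, hF, hAv]
    have : (fun j => √(q j) * f j / √(q j)) = f := by
      funext j; have := (hs j).ne'; field_simp
    rw [this]
    linear_combination (-(f i * L.mulVec f i)) * hss i
  have hN : ∑ i, q i * f i ^ 2 = inner ℝ F F := by
    rw [inn]
    refine Finset.sum_congr rfl fun i _ => ?_
    simp only [hF]
    linear_combination (-(f i ^ 2)) * hss i
  rw [hE, hN, ← b.sum_inner_mul_inner F AF, ← b.sum_inner_mul_inner F F, Finset.mul_sum]
  refine Finset.sum_le_sum fun k _ => ?_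
  rw [hkAF, real_inner_comm (b k) F]
  set t := inner ℝ (b k) F with ht
  have hL' : L.mulVec (fun j => (b k) j / √(q j)) = lam k • (fun j => (b k) j / √(q j)) := by
    funext i
    have h1 := congrFun (hev k) i
    rw [hAv] at h1
    simp only [Pi.smul_apply, smul_eq_mul] at h1 ⊢
    have := (hs i).ne'
    field_simp
    linarith
  by_cases h0 : lam k = 0
  · rw [h0, zero_smul] at hL'
    obtain ⟨c, hc⟩ := hker _ hL'
    have : t = 0 := by
      rw [ht, inn]
      have : ∀ i, (b k) i * F i = c * (q i * f i) := by
        intro i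
        have h2 := hc i
        rw [div_eq_iff (hs i).ne'] at h2
        rw [h2]; simp only [hF]
        linear_combination (c * f i) * hss i
      rw [Finset.sum_congr rfl fun i _ => this i, ← Finset.mul_sum, hf, mul_zero]
    rw [this]; simp
  · have hle : gap ≤ lam k := by
      apply hg.2
      refine ⟨h0, _, ?_, hL'⟩
      intro hz
      have hbz : b k = 0 := by
        ext i
        have := congrFun hz i
        simp only [Pi.zero_apply, div_eq_zero_iff, (hs i).ne', or_false] at this
        simpa using this
      have := b.orthonormal.1 k
      rw [hbz] at this; simp at this
    nlinarith [mul_nonneg (sub_nonneg.2 hle) (mul_self_nonneg t)]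

/-- entries of a reversible tridiagonal Laplacian -/
def g18H {N : ℕ} (K : Matrix (Fin (N + 1)) (Fin (N + 1)) ℝ) (q c : ℕ → ℝ) : Prop :=
  ∀ i j : Fin (N+1), q i * (1 - K) i j =
    (if (j:ℕ) = i then c i + c (i+1) else 0) - (if (j:ℕ) = i + 1 then c (i+1) else 0)
      - (if (j:ℕ) + 1 = i then c i else 0)

lemma g18_sym {N : ℕ} {K : Matrix (Fin (N + 1)) (Fin (N + 1)) ℝ} {q c : ℕ → ℝ} (H : g18H K q c)
    (i j : Fin (N+1)) : q i * (1 - K) i j = q j * (1 - K) j i := by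
  rw [H i j, H j i]
  rcases lt_trichotomy (i:ℕ) j with h | h | h
  · by_cases h2 : (j:ℕ) = i + 1
    · rw [if_neg (by omega), if_pos h2, if_neg (by omega), if_neg (by omega), if_neg (by omega),
        if_pos (by omega), h2]
      ring
    · rw [if_neg (by omega), if_neg h2, if_neg (by omega), if_neg (by omega), if_neg (by omega),
        if_neg (by omega)]
  · simp [h]
  · by_cases h2 : (i:ℕ) = j + 1
    · rw [if_neg (by omega), if_neg (by omega), if_pos (by omega), if_neg (by omega),
        if_pos (by omega), if_neg (by omega), h2]
      ring
    · rw [if_neg (by omega), if_neg (by omega), if_neg (by omega), if_neg (by omega),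
        if_neg (by omega), if_neg (by omega)]

lemma g18_abel (N : ℕ) (c u w : ℕ → ℝ) (c0 : c 0 = 0) :
    ∑ i ∈ range (N+1), u i * ((c i + c (i+1)) * w i - c (i+1) * w (i+1) - c i * w (i-1)) =
    ∑ e ∈ Icc 1 N, c e * ((u e - u (e-1)) * (w e - w (e-1))) + c (N+1) * u N * (w N - w (N+1)) := by
  induction N with
  | zero => simp [c0]; ring
  | succ N ih =>
    rw [Finset.sum_range_succ, ih, Finset.sum_Icc_succ_top (by omega)]
    simp only [Nat.add_sub_cancel]
    ring

lemma g18_form {N : ℕ} {K : Matrix (Fin (N + 1)) (Fin (N + 1)) ℝ} {q c : ℕ → ℝ} (H : g18H K q c)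
    (c0 : c 0 = 0) (cN : c (N+1) = 0) (u w : ℕ → ℝ) :
    ∑ i : Fin (N+1), q i * (u i * (1 - K).mulVec (fun j : Fin (N+1) => w j) i) =
      ∑ e ∈ Icc 1 N, c e * ((u e - u (e-1)) * (w e - w (e-1))) := by
  have h := g18_abel N c u w c0
  rw [cN, zero_mul, zero_mul, add_zero] at h
  rw [← h, ← Fin.sum_univ_eq_sum_range
    (fun i => u i * ((c i + c (i+1)) * w i - c (i+1) * w (i+1) - c i * w (i-1)))]
  refine Finset.sum_congr rfl fun i _ => ?_
  have h1 : q i * (1 - K).mulVec (fun j : Fin (N+1) => w j) i =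
      (c i + c (i+1)) * w i - c (i+1) * w (i+1) - c i * w (i-1) := by
    simp only [Matrix.mulVec, dotProduct, Finset.mul_sum]
    simp only [← mul_assoc, H i, sub_mul, Finset.sum_sub_distrib, ite_mul, zero_mul]
    rw [Fin.sum_univ_eq_sum_range (fun j => if j = (i:ℕ) then (c i + c (i+1)) * w j else 0),
      Fin.sum_univ_eq_sum_range (fun j => if j = (i:ℕ) + 1 then c (i+1) * w j else 0),
      Fin.sum_univ_eq_sum_range (fun j => if j + 1 = (i:ℕ) then c i * w j else 0)]
    have hi := i.2
    congr 1
    · congr 1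
      · rw [Finset.sum_ite_eq']; simp [hi]
      · rw [Finset.sum_ite_eq']
        split_ifs with h2
        · rfl
        · simp only [mem_range] at h2
          rw [show (i:ℕ) = N by omega, cN, zero_mul]
    · by_cases hi0 : (i:ℕ) = 0
      · simp [hi0, c0]
      · have : ∀ j, (j + 1 = (i:ℕ)) ↔ j = (i:ℕ) - 1 := by intro j; omega
        simp only [this]
        rw [Finset.sum_ite_eq']
        rw [if_pos (by rw [mem_range]; omega)]
  rw [← h1]; ring

lemma g18_ext {N : ℕ} (v : Fin (N+1) → ℝ) : ∃ w : ℕ → ℝ, v = fun i : Fin (N+1) => w i :=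
  ⟨fun i => if h : i < N + 1 then v ⟨i, h⟩ else 0, by funext i; simp only [i.2, dif_pos]⟩

lemma g18_ker {N : ℕ} {K : Matrix (Fin (N + 1)) (Fin (N + 1)) ℝ} {q c : ℕ → ℝ} (H : g18H K q c)
    (c0 : c 0 = 0) (cN : c (N+1) = 0) (cp : ∀ e, 1 ≤ e → e ≤ N → 0 < c e)
    (v : Fin (N+1) → ℝ) (hv : (1 - K).mulVec v = 0) : ∃ t, ∀ i, v i = t := by
  obtain ⟨w, rfl⟩ := g18_ext v
  have h := g18_form H c0 cN w w
  rw [hv] at h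
  simp only [Pi.zero_apply, mul_zero, Finset.sum_const_zero] at h
  have h2 := (Finset.sum_eq_zero_iff_of_nonneg (fun e he => by
    rw [mem_Icc] at he
    exact mul_nonneg (cp e he.1 he.2).le (mul_self_nonneg _))).1 h.symm
  refine ⟨w 0, ?_⟩
  have : ∀ i, i ≤ N → w i = w 0 := by
    intro i
    induction i with
    | zero => intro _; rfl
    | succ i ih =>
      intro hi
      have h3 := h2 (i+1) (by simp; omega)
      have h4 := cp (i+1) (by omega) hi
      simp only [Nat.add_sub_cancel, mul_eq_zero, h4.ne', false_or, or_self] at h3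
      rw [← ih (by omega)]; linarith
  intro i
  exact this i (by omega)

lemma g18_split_vert (n : ℕ) (F : ℕ → ℝ) :
    ∑ i ∈ range (2*n+1), F i = F n + ∑ d ∈ Icc 1 n, (F (n+d) + F (n-d)) := by
  have : ∀ m, m ≤ n → ∑ i ∈ Icc (n-m) (n+m), F i = F n + ∑ d ∈ Icc 1 m, (F (n+d) + F (n-d)) := by
    intro m
    induction m with
    | zero => simp
    | succ m ih =>
      intro hm
      rw [Finset.sum_Icc_succ_top (by omega), ← add_assoc (F n), ← ih (by omega)]
      have : Icc (n-(m+1)) (n+(m+1)) = insert (n-(m+1)) (insert (n+(m+1)) (Icc (n-m) (n+m))) := by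
        ext y; simp only [mem_Icc, mem_insert]; omega
      rw [this, sum_insert (by simp only [mem_Icc, mem_insert]; omega),
        sum_insert (by simp only [mem_Icc]; omega)]
      ring
  rw [← this n le_rfl]
  congr 1
  ext y; simp only [mem_Icc, mem_range]; omega

lemma g18_split_edge (n : ℕ) (F : ℕ → ℝ) :
    ∑ i ∈ Icc 1 (2*n), F i = ∑ d ∈ Icc 1 n, (F (n+d) + F (n+1-d)) := by
  have : ∀ m, m ≤ n → ∑ i ∈ Icc (n+1-m) (n+m), F i = ∑ d ∈ Icc 1 m, (F (n+d) + F (n+1-d)) := by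
    intro m
    induction m with
    | zero => simp
    | succ m ih =>
      intro hm
      rw [Finset.sum_Icc_succ_top (by omega), ← ih (by omega)]
      have : Icc (n+1-(m+1)) (n+(m+1)) =
          insert (n+1-(m+1)) (insert (n+(m+1)) (Icc (n+1-m) (n+m))) := by
        ext y; simp only [mem_Icc, mem_insert]; omega
      rw [this, sum_insert (by simp only [mem_Icc, mem_insert]; omega),
        sum_insert (by simp only [mem_Icc]; omega)]
      ring
  rw [← this n le_rfl]
  congr 1
  ext y; simp only [mem_Icc]; omega

/-- vertex weights by distance to the centre -/
def g18q (n : ℕ) (p : ℕ → ℝ) (i : ℕ) : ℝ := p ((n - i) + (i - n))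
/-- edge weights by distance to the centre -/
def g18c (n : ℕ) (w : ℕ → ℝ) (i : ℕ) : ℝ := if i ≤ n then w (n + 1 - i) else w (i - n)

lemma g18_vert (n : ℕ) (p f : ℕ → ℝ) :
    ∑ i : Fin (2*n+1), g18q n p i * f i =
      p 0 * f n + ∑ d ∈ Icc 1 n, (p d * f (n+d) + p d * f (n-d)) := by
  rw [Fin.sum_univ_eq_sum_range (fun i => g18q n p i * f i), g18_split_vert]
  congr 1
  · simp [g18q]
  · refine Finset.sum_congr rfl fun d hd => ?_
    rw [mem_Icc] at hd
    simp only [g18q]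
    rw [show (n - (n+d)) + (n+d-n) = d by omega, show (n - (n-d)) + (n-d-n) = d by omega]

lemma g18_edge (n : ℕ) (w F : ℕ → ℝ) :
    ∑ e ∈ Icc 1 (2*n), g18c n w e * F e =
      ∑ d ∈ Icc 1 n, (w d * F (n+d) + w d * F (n+1-d)) := by
  rw [g18_split_edge]
  refine Finset.sum_congr rfl fun d hd => ?_
  rw [mem_Icc] at hd
  simp only [g18c]
  rw [if_neg (by omega), if_pos (by omega), show n+d-n = d by omega,
    show n+1-(n+1-d) = d by omega]

lemma g18_c0 (n : ℕ) (w : ℕ → ℝ) (hn : 1 ≤ n) (hw1 : w (n+1) = 0) :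
    g18c n w 0 = 0 ∧ g18c n w (2*n+1) = 0 := by
  simp only [g18c]
  rw [if_pos (by omega), if_neg (by omega), show 2*n+1-n = n+1 by omega]
  exact ⟨hw1, hw1⟩

lemma g18_lower (n : ℕ) (hn : 1 ≤ n) (K : Matrix (Fin (2*n + 1)) (Fin (2*n + 1)) ℝ) (p w : ℕ → ℝ)
    (hp : ∀ d, d ≤ n → 0 < p d) (hw : ∀ d, 1 ≤ d → d ≤ n → 0 < w d) (hw1 : w (n+1) = 0)
    (H : g18H K (g18q n p) (g18c n w)) (gap : ℝ) (hg : IsGapOf (m := 2*n) K gap) (B : ℝ)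
    (hB : ∀ k, 1 ≤ k → k ≤ n → (∑ j ∈ Icc 1 k, 1 / w j) * (∑ d ∈ Icc k n, p d) ≤ B) :
    0 ≤ gap ∧ 1 ≤ 4 * B * gap := by
  obtain ⟨⟨hg0, v, hv0, hv⟩, -⟩ := hg
  obtain ⟨f, rfl⟩ := g18_ext v
  obtain ⟨c0, c1⟩ := g18_c0 n w hn hw1
  have h1 := g18_form H c0 c1 (fun _ => 1) f
  have h2 := g18_form H c0 c1 f f
  rw [hv] at h1 h2
  simp only [Pi.smul_apply, smul_eq_mul, one_mul, sub_self, zero_mul, mul_zero,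
    Finset.sum_const_zero] at h1
  simp only [Pi.smul_apply, smul_eq_mul] at h2
  have hq : ∀ i : Fin (2*n+1), 0 < g18q n p i := fun i => hp _ (by omega)
  have hmean : ∑ i : Fin (2*n+1), g18q n p i * f i = 0 := by
    have : ∑ i : Fin (2*n+1), g18q n p i * (gap * f i)
        = gap * ∑ i : Fin (2*n+1), g18q n p i * f i := by
      rw [Finset.mul_sum]; exact Finset.sum_congr rfl fun i _ => by ring
    rw [this] at h1
    exact (mul_eq_zero.1 h1).resolve_left hg0
  set S := ∑ i : Fin (2*n+1), g18q n p i * (fun i => f i ^ 2) i with hS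
  have hE : gap * S = ∑ e ∈ Icc 1 (2*n), g18c n w e * (fun e => (f e - f (e-1)) ^ 2) e := by
    rw [hS, Finset.mul_sum]
    refine Eq.trans (Finset.sum_congr rfl fun i _ => ?_) (h2.trans (Finset.sum_congr rfl fun i _ => ?_))
    · ring
    · ring
  have hSpos : 0 < S := by
    have hne : ∃ i, (fun i : Fin (2*n+1) => f i) i ≠ 0 := Function.ne_iff.1 hv0
    obtain ⟨i, hi⟩ := hne
    exact Finset.sum_pos' (fun j _ => mul_nonneg (hq j).le (sq_nonneg _))
      ⟨i, mem_univ _, mul_pos (hq i) (by positivity)⟩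
  rw [g18_edge] at hE
  have hE0 : 0 ≤ gap * S := by
    rw [hE]
    refine Finset.sum_nonneg fun d hd => ?_
    rw [mem_Icc] at hd
    have := hw d hd.1 hd.2
    positivity
  refine ⟨nonneg_of_mul_nonneg_left hE0 hSpos, ?_⟩
  have hr := g18_hardy n p w (fun d => f (n+d) - f n) (fun d _ h => hp d h) hw B hB (by simp)
  have hl := g18_hardy n p w (fun d => f (n-d) - f n) (fun d _ h => hp d h) hw B hB (by simp)
  have hEe : gap * S = ∑ d ∈ Icc 1 n, w d * ((f (n+d) - f n) - (f (n+(d-1)) - f n)) ^ 2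
      + ∑ d ∈ Icc 1 n, w d * ((f (n-d) - f n) - (f (n-(d-1)) - f n)) ^ 2 := by
    rw [hE, ← Finset.sum_add_distrib]
    refine Finset.sum_congr rfl fun d hd => ?_
    rw [mem_Icc] at hd
    rw [show n+d-1 = n+(d-1) by omega, show n+1-d-1 = n-d by omega,
      show n+1-d = n-(d-1) by omega]
    ring
  have hV : S + f n ^ 2 * ∑ i : Fin (2*n+1), g18q n p i =
      ∑ d ∈ Icc 1 n, p d * (f (n+d) - f n) ^ 2 + ∑ d ∈ Icc 1 n, p d * (f (n-d) - f n) ^ 2 := by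
    have h3 := g18_vert n p (fun i => (f i - f n) ^ 2)
    have h4 : ∑ i : Fin (2*n+1), g18q n p i * (fun i => (f i - f n) ^ 2) i =
        S - 2 * f n * ∑ i : Fin (2*n+1), g18q n p i * f i
          + f n ^ 2 * ∑ i : Fin (2*n+1), g18q n p i := by
      rw [hS, Finset.mul_sum, Finset.mul_sum, ← Finset.sum_sub_distrib, ← Finset.sum_add_distrib]
      exact Finset.sum_congr rfl fun i _ => by ring
    rw [h4, hmean] at h3
    rw [← Finset.sum_add_distrib]
    simpa using h3
  have hQ : 0 ≤ f n ^ 2 * ∑ i : Fin (2*n+1), g18q n p i :=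
    mul_nonneg (sq_nonneg _) (Finset.sum_nonneg fun i _ => (hq i).le)
  have : 1 * S ≤ 4 * B * gap * S := by
    rw [mul_assoc, hEe]
    linarith
  exact le_of_mul_le_mul_right this hSpos

lemma g18_upper (n : ℕ) (hn : 1 ≤ n) (K : Matrix (Fin (2*n + 1)) (Fin (2*n + 1)) ℝ) (p w : ℕ → ℝ)
    (hp : ∀ d, d ≤ n → 0 < p d) (hw : ∀ d, 1 ≤ d → d ≤ n → 0 < w d) (hw1 : w (n+1) = 0)
    (H : g18H K (g18q n p) (g18c n w)) (gap : ℝ) (hg : IsGapOf (m := 2*n) K gap) (hg0 : 0 ≤ gap)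
    (k : ℕ) (hk1 : 1 ≤ k) (hkn : k ≤ n) :
    gap * ((∑ j ∈ Icc 1 k, 1 / w j) * (∑ d ∈ Icc k n, p d)) ≤ 1 := by
  obtain ⟨c0, c1⟩ := g18_c0 n w hn hw1
  set h : ℕ → ℝ := fun d => ∑ j ∈ Icc 1 (min d k), 1 / w j with hh
  have h0 : h 0 = 0 := by simp [hh]
  set f : ℕ → ℝ := fun i => h (i - n) - h (n - i) with hf
  have fr : ∀ d, f (n+d) = h d := by
    intro d; simp only [hf]; rw [show n+d-n = d by omega, show n-(n+d) = 0 by omega, h0, sub_zero]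
  have fl : ∀ d, d ≤ n → f (n-d) = - h d := by
    intro d hd; simp only [hf]
    rw [show n-d-n = 0 by omega, show n-(n-d) = d by omega, h0, zero_sub]
  have fn : f n = 0 := by have := fr 0; rwa [add_zero, h0] at this
  have hm : ∑ i : Fin (2*n+1), g18q n p i * f i = 0 := by
    rw [g18_vert, fn, mul_zero, zero_add]
    refine Finset.sum_eq_zero fun d hd => ?_
    rw [mem_Icc] at hd
    rw [fr, fl d hd.2]; ring
  have hR := g18_rayleigh K (fun i => g18q n p i) (fun i => hp _ (by omega)) (g18_sym H)
    (g18_ker H c0 c1 (fun e h1 h2 => by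
      simp only [g18c]; split_ifs
      · exact hw _ (by omega) (by omega)
      · exact hw _ (by omega) (by omega))) gap hg (fun i => f i) hm
  rw [g18_form H c0 c1 f f] at hR
  have e1 := g18_vert n p (fun i => f i ^ 2)
  have e2 := g18_edge n w (fun e => (f e - f (e-1)) * (f e - f (e-1)))
  rw [e1, e2] at hR
  simp only [fn] at hR
  have e3 : ∑ d ∈ Icc 1 n, (p d * f (n+d) ^ 2 + p d * f (n-d) ^ 2) =
      2 * ∑ d ∈ Icc 1 n, p d * h d ^ 2 := by
    rw [Finset.mul_sum]
    refine Finset.sum_congr rfl fun d hd => ?_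
    rw [mem_Icc] at hd
    rw [fr, fl d hd.2]; ring
  set A := ∑ j ∈ Icc 1 k, 1 / w j with hA
  have hApos : 0 < A := Finset.sum_pos (fun j hj => by
      rw [mem_Icc] at hj; exact one_div_pos.2 (hw j hj.1 (by omega))) ⟨1, by simp [hk1]⟩
  have e4 : ∑ d ∈ Icc 1 n, (w d * ((f (n+d) - f (n+d-1)) * (f (n+d) - f (n+d-1))) +
      w d * ((f (n+1-d) - f (n+1-d-1)) * (f (n+1-d) - f (n+1-d-1)))) = 2 * A := by
    have : ∀ d ∈ Icc 1 n, (w d * ((f (n+d) - f (n+d-1)) * (f (n+d) - f (n+d-1))) +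
      w d * ((f (n+1-d) - f (n+1-d-1)) * (f (n+1-d) - f (n+1-d-1)))) =
        if d ≤ k then 2 * (1 / w d) else 0 := by
      intro d hd
      rw [mem_Icc] at hd
      rw [show n+d-1 = n+(d-1) by omega, show n+1-d-1 = n-d by omega,
        show n+1-d = n-(d-1) by omega, fr, fr, fl d hd.2, fl (d-1) (by omega)]
      have hwd := hw d hd.1 hd.2
      split_ifs with hdk
      · have : h d = h (d-1) + 1 / w d := by
          simp only [hh]
          rw [min_eq_left hdk, min_eq_left (by omega)]
          obtain ⟨e, rfl⟩ : ∃ e, d = e + 1 := ⟨d-1, by omega⟩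
          rw [Finset.sum_Icc_succ_top (by omega)]; simp
        rw [this]; field_simp; ring
      · have : h d = h (d-1) := by
          simp only [hh]
          rw [min_eq_right (by omega), min_eq_right (by omega)]
        rw [this]; ring
    rw [Finset.sum_congr rfl this, ← Finset.sum_filter, hA, Finset.mul_sum]
    refine Finset.sum_congr ?_ fun _ _ => rfl
    ext y; simp only [mem_filter, mem_Icc]; omega
  rw [e3, e4] at hR
  have e5 : A ^ 2 * ∑ d ∈ Icc k n, p d ≤ ∑ d ∈ Icc 1 n, p d * h d ^ 2 := by
    rw [Finset.mul_sum]
    calc ∑ d ∈ Icc k n, A ^ 2 * p d = ∑ d ∈ Icc k n, p d * h d ^ 2 := by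
          refine Finset.sum_congr rfl fun d hd => ?_
          rw [mem_Icc] at hd
          simp only [hh]; rw [min_eq_right hd.1]; ring
      _ ≤ _ := by
          apply sum_le_sum_of_subset_of_nonneg
          · intro i; simp only [mem_Icc]; omega
          · intro i hi _; simp only [mem_Icc] at hi
            exact mul_nonneg (hp i hi.2).le (sq_nonneg _)
  have e6 := mul_le_mul_of_nonneg_left e5 hg0
  have : A * (gap * (A * ∑ d ∈ Icc k n, p d)) ≤ A * 1 := by nlinarith
  exact le_of_mul_le_mul_left this hApos

lemma g18_mkH (n : ℕ) (hn : 1 ≤ n) (K : Matrix (Fin (2*n + 1)) (Fin (2*n + 1)) ℝ) (p w : ℕ → ℝ)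
    (Kp : ℤ → ℤ → ℝ)
    (hK : ∀ i j : Fin (2*n+1), K i j = if 0 ≤ ((i:ℕ):ℤ) - n then Kp (((i:ℕ):ℤ) - n) (((j:ℕ):ℤ) - n)
      else Kp (-(((i:ℕ):ℤ) - n)) (-(((j:ℕ):ℤ) - n)))
    (h0 : ∀ y : ℤ, p 0 * ((if y = 0 then 1 else 0) - Kp 0 y) =
      (if y = 0 then w 1 + w 1 else 0) - (if y = 1 then w 1 else 0) - (if y = -1 then w 1 else 0))
    (hd : ∀ d : ℕ, 1 ≤ d → d ≤ n → ∀ y : ℤ, p d * ((if y = d then 1 else 0) - Kp d y) =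
      (if y = d then w d + w (d+1) else 0) - (if y = d + 1 then w (d+1) else 0)
        - (if y = d - 1 then w d else 0)) :
    g18H K (g18q n p) (g18c n w) := by
  intro I J
  have hi := I.2
  rw [Matrix.sub_apply, Matrix.one_apply, hK]
  have hij : (if I = J then (1:ℝ) else 0) = if (J:ℕ) = I then 1 else 0 := by
    congr 1; rw [Fin.ext_iff]; exact propext eq_comm
  rw [hij]
  clear hij
  simp only [g18q, g18c]
  clear hK
  generalize (I:ℕ) = i at hi ⊢
  generalize (J:ℕ) = j
  rcases lt_trichotomy i n with h | h | h
  · obtain ⟨d, rfl⟩ : ∃ d, n = i + d := ⟨n - i, by omega⟩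
    have := hd d (by omega) (by omega) (-((j:ℤ) - ((i + d : ℕ):ℤ)))
    rw [if_neg (show ¬ (0 ≤ (i:ℤ) - ((i+d:ℕ):ℤ)) by push_cast; omega),
      show -((i:ℤ) - ((i+d:ℕ):ℤ)) = d by push_cast; ring,
      if_pos (show i ≤ i + d by omega), if_pos (show i + 1 ≤ i + d by omega),
      show i + d - i + (i - (i + d)) = d by omega, show i + d + 1 - i = d + 1 by omega,
      show i + d + 1 - (i+1) = d by omega]
    simp only [show (-((j:ℤ) - ((i + d : ℕ):ℤ)) = d) ↔ j = i by omega,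
      show (-((j:ℤ) - ((i + d : ℕ):ℤ)) = d + 1) ↔ j + 1 = i by omega,
      show (-((j:ℤ) - ((i + d : ℕ):ℤ)) = d - 1) ↔ j = i + 1 by omega] at this
    rw [this, add_comm (w d)]; ring
  · subst h
    have := h0 ((j:ℤ) - (i:ℤ))
    rw [sub_self, if_pos le_rfl, if_pos le_rfl, if_neg (show ¬ (i + 1 ≤ i) by omega), show i - i + (i - i) = 0 by omega,
      show i + 1 - i = 1 by omega]
    simp only [show ((j:ℤ) - (i:ℤ) = 0) ↔ j = i by omega,
      show ((j:ℤ) - (i:ℤ) = 1) ↔ j = i + 1 by omega,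
      show ((j:ℤ) - (i:ℤ) = -1) ↔ j + 1 = i by omega] at this
    rw [this]
  · obtain ⟨d, rfl⟩ : ∃ d, i = n + d := ⟨i - n, by omega⟩
    have := hd d (by omega) (by omega) ((j:ℤ) - (n:ℤ))
    rw [if_pos (show (0 ≤ ((n+d:ℕ):ℤ) - (n:ℤ)) by push_cast; omega),
      show (((n+d:ℕ):ℤ) - (n:ℤ)) = d by push_cast; ring,
      if_neg (show ¬ (n + d ≤ n) by omega), if_neg (show ¬ (n + d + 1 ≤ n) by omega),
      show n - (n + d) + (n + d - n) = d by omega, show n + d + 1 - n = d + 1 by omega,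
      show n + d - n = d by omega]
    simp only [show ((j:ℤ) - (n:ℤ) = d) ↔ j = n + d by omega,
      show ((j:ℤ) - (n:ℤ) = d + 1) ↔ j = n + d + 1 by omega,
      show ((j:ℤ) - (n:ℤ) = d - 1) ↔ j + 1 = n + d by omega] at this
    rw [this]

lemma g18_checkH (n : ℕ) (hn : 1 ≤ n) (a : ℝ) (ha : 0 < a) :
    g18H (checkMat n a) (g18q n fun d => ((d:ℝ) + 1) ^ a)
      (g18c n fun d => if d ≤ n then (d:ℝ) ^ a / 2 else 0) := by
  refine g18_mkH n hn _ _ _ (checkKpos n a) (fun i j => rfl) ?_ ?_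
  · intro y
    simp only [checkKpos]
    rw [if_pos hn]
    by_cases h1 : y = 0
    · subst h1
      split_ifs <;> first | (exfalso; omega) | (exfalso; tauto) | (simp; done) | norm_num
    by_cases h2 : y = 1
    · subst h2
      split_ifs <;> first | (exfalso; omega) | (simp; done)
    by_cases h3 : y = -1
    · subst h3; simp
    · simp [h1, h2, h3]
  · intro d hd1 hdn y
    have hp : (0:ℝ) < ((d:ℝ) + 1) ^ a := by positivity
    simp only [checkKpos]
    rw [if_pos hdn]
    push_cast
    by_cases h1 : y = d
    · subst h1
      by_cases hd : d = n
      · subst hd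
        split_ifs <;> first | (exfalso; omega) | (field_simp; ring)
      · split_ifs <;> first | (exfalso; omega) | (field_simp; ring)
    by_cases h2 : y = d + 1
    · subst h2
      by_cases hd : d = n
      · subst hd
        rw [if_neg (by omega), if_neg (by omega), if_neg (by omega), if_neg (by omega),
          if_neg (by omega), if_neg (by omega), if_neg (by omega), if_pos rfl, if_neg (by omega),
          if_neg (by omega)]
        simp
      · rw [if_neg (by omega), if_pos (by omega), if_neg (by omega), if_pos (by omega),
          if_pos (by omega), if_neg (by omega)]
        ring
    by_cases h3 : y = d - 1
    · subst h3
      rw [if_neg (by omega), if_neg (by omega), if_pos (by omega), if_neg (by omega),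
          if_neg (by omega), if_pos (by omega)]
      field_simp; ring
    · rw [if_neg (by omega), if_neg (by omega), if_neg (by omega), if_neg (by omega),
          if_neg (by omega), if_neg (by omega), if_neg (by omega), if_neg (by omega),
          if_neg (by omega)]
      ring

lemma g18_hatH (n : ℕ) (hn : 1 ≤ n) (a : ℝ) (ha : 0 < a) :
    g18H (hatMat n a) (g18q n fun d => ((n:ℝ) - d + 1) ^ a)
      (g18c n fun d => ((n:ℝ) - d + 1) ^ a / 2) := by
  refine g18_mkH n hn _ _ _ (hatKpos n a) (fun i j => rfl) ?_ ?_
  · intro y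
    have hp : (0:ℝ) < ((n:ℝ) + 1) ^ a := by positivity
    simp only [hatKpos]
    by_cases h1 : y = 0
    · subst h1; simp; field_simp
    by_cases h2 : y = 1
    · subst h2
      rw [if_neg (by omega), if_neg (by omega), if_pos (by omega)]
      simp; field_simp
    by_cases h3 : y = -1
    · subst h3; simp; field_simp
    · simp [h1, h2, h3]
  · intro d hd1 hdn y
    have hdn' : (d:ℝ) ≤ n := by exact_mod_cast hdn
    have hp : (0:ℝ) < ((n:ℝ) - d + 1) ^ a := Real.rpow_pos_of_pos (by linarith) _
    simp only [hatKpos]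
    push_cast
    rw [show (n:ℝ) - ((d:ℝ) + 1) + 1 = n - d by ring]
    by_cases h1 : y = d
    · subst h1
      rw [if_pos rfl, if_neg (by omega), if_neg (by omega), if_neg (by omega), if_neg (by omega),
        if_pos (by omega), if_pos rfl, if_neg (by omega), if_neg (by omega)]
      field_simp; ring
    by_cases h2 : y = d + 1
    · subst h2
      by_cases hd : d = n
      · subst hd
        rw [if_neg (by omega), if_neg (by omega), if_neg (by omega), if_neg (by omega),
          if_neg (by omega), if_neg (by omega), if_neg (by omega), if_pos rfl, if_neg (by omega)]
        simp [Real.zero_rpow ha.ne']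
      · rw [if_neg (by omega), if_neg (by omega), if_pos (by omega), if_neg (by omega),
          if_pos (by omega), if_neg (by omega)]
        field_simp; ring
    by_cases h3 : y = d - 1
    · subst h3
      rw [if_neg (by omega), if_pos (by omega), if_neg (by omega),
          if_neg (by omega), if_pos (by omega)]
      ring
    · rw [if_neg (by omega), if_neg (by omega), if_neg (by omega), if_neg (by omega),
          if_neg (by omega), if_neg (by omega), if_neg (by omega), if_neg (by omega),
          if_neg (by omega)]
      ring

lemma g18_R1 (a b : ℕ) (hab : a ≤ b) (F : ℕ → ℝ) :
    ∑ i ∈ Icc a b, F i = ∑ i ∈ range (b - a + 1), F (a + i) := by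
  refine Finset.sum_nbij' (fun i => i - a) (fun i => a + i) ?_ ?_ ?_ ?_ ?_
  · intro i; simp only [mem_Icc, mem_range]; omega
  · intro i; simp only [mem_Icc, mem_range]; omega
  · intro i; simp only [mem_Icc]; omega
  · intro i; simp
  · intro i hi; rw [mem_Icc] at hi; rw [show a + (i - a) = i by omega]

lemma g18_R2 (a b : ℕ) (hab : a ≤ b) (F : ℕ → ℝ) :
    ∑ i ∈ Icc a b, F i = ∑ i ∈ range (b - a + 1), F (b - i) := by
  refine Finset.sum_nbij' (fun i => b - i) (fun i => b - i) ?_ ?_ ?_ ?_ ?_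
  · intro i; simp only [mem_Icc, mem_range]; omega
  · intro i; simp only [mem_Icc, mem_range]; omega
  · intro i; simp only [mem_Icc]; omega
  · intro i; simp only [mem_range]; omega
  · intro i hi; rw [mem_Icc] at hi; rw [show b - (b - i) = i by omega]

lemma g18_refl (n a b : ℕ) (ha : 1 ≤ a) (hb : b ≤ n) (F : ℕ → ℝ) :
    ∑ d ∈ Icc a b, F (n + 1 - d) = ∑ i ∈ Icc (n+1-b) (n+1-a), F i := by
  refine Finset.sum_nbij' (fun i => n+1 - i) (fun i => n+1 - i) ?_ ?_ ?_ ?_ ?_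
  · intro i; simp only [mem_Icc]; omega
  · intro i; simp only [mem_Icc]; omega
  · intro i; simp only [mem_Icc]; omega
  · intro i; simp only [mem_Icc]; omega
  · intro i hi; rfl

lemma g18_eta_pos (a : ℝ) (k l : ℕ) (hk : 1 ≤ k) (hkl : k ≤ l) : 0 < eta a k l :=
  Finset.sum_pos (fun j hj => by
    rw [mem_Icc] at hj
    exact Real.rpow_pos_of_pos (by exact_mod_cast (show 0 < j by omega)) _) ⟨k, by simp [hkl]⟩

lemma g18_eta_mono (a : ℝ) (k l k' l' : ℕ) (hk : k' ≤ k) (hl : l ≤ l') : eta a k l ≤ eta a k' l' := by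
  apply sum_le_sum_of_subset_of_nonneg
  · intro i; simp only [mem_Icc]; omega
  · intro i _ _; positivity

lemma g18_half1 (a : ℝ) (ha : 0 < a) (n : ℕ) (hn : 1 ≤ n) :
    eta (-a) 1 n ≤ 2 * eta (-a) 1 ((n+1)/2) := by
  unfold eta
  rw [g18_R1 1 n hn, g18_R1 1 ((n+1)/2) (by omega)]
  apply g18_div_two
  · intro i _
    apply Real.rpow_le_rpow_of_nonpos (by positivity) _ (by linarith)
    exact_mod_cast (show 1 + i / 2 ≤ 1 + i by omega)
  · intro i _; positivity
  · omega

lemma g18_half2 (a : ℝ) (ha : 0 < a) (n : ℕ) (hn : 1 ≤ n) :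
    eta a 2 (n+1) ≤ 2 * eta a ((n+1)/2 + 1) (n+1) := by
  unfold eta
  rw [g18_R2 2 (n+1) (by omega), g18_R2 ((n+1)/2+1) (n+1) (by omega)]
  apply g18_div_two
  · intro i _
    apply Real.rpow_le_rpow (by positivity) _ ha.le
    exact_mod_cast (show n + 1 - i ≤ n + 1 - i / 2 by omega)
  · intro i _; positivity
  · omega

lemma g18_S (a : ℝ) (ha : 0 < a) (k m : ℕ) (hk : 1 ≤ k) (hm : 1 ≤ m) (hkm : k ≤ 2 * m) :
    eta a 1 k / (k:ℝ) ^ a ≤ 2 * (eta a 1 m / (m:ℝ) ^ a) := by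
  unfold eta
  rw [g18_R2 1 k hk, g18_R2 1 m hm, Finset.sum_div, Finset.sum_div]
  have hk0 : (0:ℝ) < k := by exact_mod_cast hk
  have hm0 : (0:ℝ) < m := by exact_mod_cast hm
  apply g18_div_two
  · intro i hi
    rw [← Real.div_rpow (by positivity) (by positivity), ← Real.div_rpow (by positivity) (by positivity)]
    apply Real.rpow_le_rpow (by positivity) _ ha.le
    rw [div_le_div_iff₀ hk0 hm0]
    rw [Nat.cast_sub (by omega), Nat.cast_sub (by omega)]
    have h1 : (2:ℝ) * ((i/2 : ℕ):ℝ) ≤ i := by exact_mod_cast (show 2 * (i/2) ≤ i by omega)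
    have h2 : (k:ℝ) ≤ 2 * m := by exact_mod_cast hkm
    have h3 : (0:ℝ) ≤ ((i/2 : ℕ):ℝ) := by positivity
    nlinarith [mul_le_mul_of_nonneg_left h1 hm0.le, mul_le_mul_of_nonneg_right h2 h3]
  · intro i _; positivity
  · omega

lemma g18_T (a : ℝ) (ha : 0 < a) (n k m : ℕ) (hk : 1 ≤ k) (hm : 1 ≤ m) (hkm : k ≤ 2 * m)
    (hkn : k ≤ n) (hmn : m ≤ n) (hnm : n - k ≤ 2 * (n - m) + 1) :
    eta (-a) k n / (k:ℝ) ^ (-a) ≤ 2 * (eta (-a) m n / (m:ℝ) ^ (-a)) := by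
  unfold eta
  rw [g18_R1 k n hkn, g18_R1 m n hmn, Finset.sum_div, Finset.sum_div]
  have hk0 : (0:ℝ) < k := by exact_mod_cast hk
  have hm0 : (0:ℝ) < m := by exact_mod_cast hm
  apply g18_div_two
  · intro i hi
    rw [← Real.div_rpow (by positivity) (by positivity), ← Real.div_rpow (by positivity) (by positivity)]
    apply Real.rpow_le_rpow_of_nonpos (by positivity) _ (by linarith)
    rw [div_le_div_iff₀ hm0 hk0]
    push_cast only [Nat.cast_add]
    have h1 : (2:ℝ) * ((i/2 : ℕ):ℝ) ≤ i := by exact_mod_cast (show 2 * (i/2) ≤ i by omega)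
    have h2 : (k:ℝ) ≤ 2 * m := by exact_mod_cast hkm
    have h3 : (0:ℝ) ≤ ((i/2 : ℕ):ℝ) := by positivity
    nlinarith [mul_le_mul_of_nonneg_left h1 hm0.le, mul_le_mul_of_nonneg_right h2 h3]
  · intro i _; positivity
  · omega

lemma g18_ST (a : ℝ) (ha : 0 < a) (n k : ℕ) (hk : 1 ≤ k) (hkn : k ≤ n) :
    eta (-a) k n * eta a 1 k ≤ 4 * (eta (-a) ((n+1)/2) n * eta a 1 ((n+1)/2)) := by
  set m := (n+1)/2 with hm
  have hS := g18_S a ha k m hk (by omega) (by omega)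
  have hT := g18_T a ha n k m hk (by omega) (by omega) hkn (by omega) (by omega)
  have hk0 : (0:ℝ) < k := by exact_mod_cast hk
  have hm0 : (0:ℝ) < m := by exact_mod_cast (show 0 < m by omega)
  have e : ∀ x : ℝ, 0 < x → ∀ A B : ℝ, (A / x ^ (-a)) * (B / x ^ a) = A * B := by
    intro x hx A B
    rw [Real.rpow_neg hx.le]
    have := Real.rpow_pos_of_pos hx a
    field_simp
  have h1 := g18_eta_pos a 1 k le_rfl hk
  have h2 := g18_eta_pos (-a) m n (by omega) (by omega)
  have := mul_le_mul hT hS (by positivity) (by positivity)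
  rw [e _ hk0] at this
  calc _ ≤ _ := this
    _ = 4 * ((eta (-a) m n / (m:ℝ) ^ (-a)) * (eta a 1 m / (m:ℝ) ^ a)) := by ring
    _ = _ := by rw [e _ hm0]

theorem stmt18 (n : ℕ) (hn : 1 ≤ n) (a : ℝ) (ha : 0 < a)
    (checkGap hatGap : ℝ)
    (hcheck : IsGapOf (m := 2 * n) (checkMat n a) checkGap)
    (hhat : IsGapOf (m := 2 * n) (hatMat n a) hatGap) :
    (1 / (8 * eta (-a) 1 n * eta a 2 (n + 1)) ≤ checkGap ∧
      checkGap ≤ 2 / (eta (-a) 1 n * eta a 2 (n + 1))) ∧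
    (1 / (64 * eta a 1 ((n + 1) / 2) * eta (-a) ((n + 1) / 2) n) ≤ hatGap ∧
      hatGap ≤ 1 / (2 * eta a 1 ((n + 1) / 2) * eta (-a) ((n + 1) / 2) n)) := by
  refine ⟨?_, ?_⟩
  · set p : ℕ → ℝ := fun d => ((d:ℝ) + 1) ^ a with hpdef
    set w : ℕ → ℝ := fun d => if d ≤ n then (d:ℝ) ^ a / 2 else 0 with hwdef
    have hp : ∀ d, d ≤ n → 0 < p d := fun d _ => by simp only [hpdef]; positivity
    have hw : ∀ d, 1 ≤ d → d ≤ n → 0 < w d := fun d h1 h2 => by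
      simp only [hwdef]; rw [if_pos h2]
      have : (0:ℝ) < d := by exact_mod_cast h1
      positivity
    have hw1 : w (n+1) = 0 := by simp [hwdef]
    have H : g18H (checkMat n a) (g18q n p) (g18c n w) := g18_checkH n hn a ha
    have hA : ∀ k, k ≤ n → ∑ j ∈ Icc 1 k, 1 / w j = 2 * eta (-a) 1 k := by
      intro k hk
      rw [eta, Finset.mul_sum]
      refine Finset.sum_congr rfl fun j hj => ?_
      rw [mem_Icc] at hj
      simp only [hwdef]
      rw [if_pos (by omega), Real.rpow_neg (by positivity), one_div_div, div_eq_mul_inv]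
    have hP : ∀ k, ∑ d ∈ Icc k n, p d = eta a (k+1) (n+1) := by
      intro k
      rw [eta]
      refine Finset.sum_nbij' (fun i => i + 1) (fun i => i - 1) ?_ ?_ ?_ ?_ ?_
      · intro i; simp only [mem_Icc]; omega
      · intro i; simp only [mem_Icc]; omega
      · intro i; simp
      · intro i; simp only [mem_Icc]; omega
      · intro i _; simp [hpdef]
    have hη1 := g18_eta_pos (-a) 1 n le_rfl hn
    have hη2 := g18_eta_pos a 2 (n+1) (by omega) (by omega)
    obtain ⟨hg0, hlow⟩ := g18_lower n hn _ p w hp hw hw1 H checkGap hcheck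
      (2 * eta (-a) 1 n * eta a 2 (n+1)) (by
        intro k hk1 hkn
        rw [hA k hkn, hP]
        have := g18_eta_pos a (k+1) (n+1) (by omega) (by omega)
        gcongr
        · exact g18_eta_mono _ _ _ _ _ le_rfl hkn
        · exact g18_eta_mono _ _ _ _ _ (by omega) le_rfl)
    have hup := g18_upper n hn _ p w hp hw hw1 H checkGap hcheck hg0 ((n+1)/2) (by omega) (by omega)
    rw [hA _ (by omega), hP] at hup
    constructor
    · rw [div_le_iff₀ (by positivity)]
      linarith
    · rw [le_div_iff₀ (by positivity)]
      have h3 := mul_le_mul (g18_half1 a ha n hn) (g18_half2 a ha n hn) hη2.le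
        (by have := g18_eta_pos (-a) 1 ((n+1)/2) le_rfl (by omega); positivity)
      have h4 := mul_le_mul_of_nonneg_left h3 hg0
      linarith
  · set p : ℕ → ℝ := fun d => ((n:ℝ) - d + 1) ^ a with hpdef
    set w : ℕ → ℝ := fun d => ((n:ℝ) - d + 1) ^ a / 2 with hwdef
    have hpp : ∀ d, d ≤ n → 0 < ((n:ℝ) - d + 1) ^ a := fun d h => by
      have : (d:ℝ) ≤ n := by exact_mod_cast h
      exact Real.rpow_pos_of_pos (by linarith) _
    have hp : ∀ d, d ≤ n → 0 < p d := hpp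
    have hw : ∀ d, 1 ≤ d → d ≤ n → 0 < w d := fun d _ h2 => half_pos (hpp d h2)
    have hw1 : w (n+1) = 0 := by simp [hwdef, Real.zero_rpow ha.ne']
    have H : g18H (hatMat n a) (g18q n p) (g18c n w) := g18_hatH n hn a ha
    have hcast : ∀ d, d ≤ n → (n:ℝ) - d + 1 = ((n + 1 - d : ℕ):ℝ) := by
      intro d hd; rw [Nat.cast_sub (by omega)]; push_cast; ring
    have hA : ∀ k, k ≤ n → ∑ j ∈ Icc 1 k, 1 / w j = 2 * eta (-a) (n+1-k) n := by
      intro k hk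
      have := g18_refl n 1 k le_rfl hk (fun i => (i:ℝ) ^ (-a))
      simp only [Nat.add_sub_cancel] at this
      rw [eta, ← this, Finset.mul_sum]
      refine Finset.sum_congr rfl fun j hj => ?_
      rw [mem_Icc] at hj
      simp only [hwdef]
      rw [hcast j (by omega), Real.rpow_neg (by positivity), one_div_div, div_eq_mul_inv]
    have hP : ∀ k, 1 ≤ k → ∑ d ∈ Icc k n, p d = eta a 1 (n+1-k) := by
      intro k hk
      have := g18_refl n k n hk le_rfl (fun i => (i:ℝ) ^ a)
      rw [show n + 1 - n = 1 by omega] at this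
      rw [eta, ← this]
      refine Finset.sum_congr rfl fun j hj => ?_
      rw [mem_Icc] at hj
      simp only [hpdef]
      rw [hcast j (by omega)]
    have hη1 := g18_eta_pos a 1 ((n+1)/2) le_rfl (by omega)
    have hη2 := g18_eta_pos (-a) ((n+1)/2) n (by omega) (by omega)
    obtain ⟨hg0, hlow⟩ := g18_lower n hn _ p w hp hw hw1 H hatGap hhat
      (8 * (eta (-a) ((n+1)/2) n * eta a 1 ((n+1)/2))) (by
        intro k hk1 hkn
        rw [hA k hkn, hP k hk1]
        have := g18_ST a ha n (n+1-k) (by omega) (by omega)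
        linarith)
    have hup := g18_upper n hn _ p w hp hw hw1 H hatGap hhat hg0 (n+1-(n+1)/2) (by omega) (by omega)
    rw [hA _ (by omega), hP _ (by omega), show n+1-(n+1-(n+1)/2) = (n+1)/2 by omega] at hup
    constructor
    · rw [div_le_iff₀ (by positivity)]
      have : 0 ≤ hatGap * (eta a 1 ((n+1)/2) * eta (-a) ((n+1)/2) n) := by positivity
      linarith
    · rw [le_div_iff₀ (by positivity)]
      linarith
end

section
/- The finite-path spectral gaps are strictly decreasing: λ^{G_{n+1}}_{π_{n+1},ν_{n+1}} < λ^{G_n}_{π_n,ν_n} for all n > 1, and they converge to the spectral gap of the infinite path: λ^G_{π,ν} = lim_{n→∞} λ^{G_n}_{π_n,ν_n}. -/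
open Finset

namespace Gap

noncomputable def Z (p : ℕ → ℝ) (n : ℕ) : ℝ := ∑ i ∈ range n, p i
noncomputable def S (p f : ℕ → ℝ) (n : ℕ) : ℝ := ∑ i ∈ range n, f i * p i
noncomputable def Q (p f : ℕ → ℝ) (n : ℕ) : ℝ := ∑ i ∈ range n, f i ^ 2 * p i
noncomputable def W (p f : ℕ → ℝ) (n : ℕ) : ℝ := Q p f n - S p f n ^ 2 / Z p n
noncomputable def E (v f : ℕ → ℝ) (n : ℕ) : ℝ := ∑ i ∈ range n, (f i - f (i + 1)) ^ 2 * v i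

lemma Z_pos {p : ℕ → ℝ} (hp : ∀ i, 0 < p i) (n : ℕ) : 0 < Z p (n + 1) :=
  Finset.sum_pos (fun i _ => hp i) ⟨0, by simp⟩

lemma W_succ {p : ℕ → ℝ} (hp : ∀ i, 0 < p i) (f : ℕ → ℝ) (n : ℕ) :
    W p f (n + 2) = W p f (n + 1) +
      p (n + 1) * Z p (n + 1) / Z p (n + 2) * (f (n + 1) - S p f (n + 1) / Z p (n + 1)) ^ 2 := by
  have h1 := Z_pos hp n
  have h2 := Z_pos hp (n + 1)
  have e : Z p (n + 2) = Z p (n + 1) + p (n + 1) := Finset.sum_range_succ _ _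
  have e1 : S p f (n + 2) = S p f (n + 1) + f (n + 1) * p (n + 1) := Finset.sum_range_succ _ _
  have e2 : Q p f (n + 2) = Q p f (n + 1) + f (n + 1) ^ 2 * p (n + 1) := Finset.sum_range_succ _ _
  have h3 : 0 < Z p (n + 1) + p (n + 1) := by rw [← e]; exact h2
  unfold W
  rw [e, e1, e2]
  field_simp
  ring

lemma W_one {p : ℕ → ℝ} (hp : ∀ i, 0 < p i) (f : ℕ → ℝ) : W p f 1 = 0 := by
  have := hp 0
  simp [W, Q, S, Z]
  field_simp
  ring

lemma coef_pos {p : ℕ → ℝ} (hp : ∀ i, 0 < p i) (n : ℕ) :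
    0 < p (n + 1) * Z p (n + 1) / Z p (n + 2) :=
  div_pos (mul_pos (hp _) (Z_pos hp n)) (Z_pos hp (n + 1))

lemma W_mono {p : ℕ → ℝ} (hp : ∀ i, 0 < p i) (f : ℕ → ℝ) :
    Monotone fun n => W p f (n + 1) := by
  refine monotone_nat_of_le_succ fun n => ?_
  have := W_succ hp f n
  have := mul_nonneg (coef_pos hp n).le (sq_nonneg (f (n + 1) - S p f (n + 1) / Z p (n + 1)))
  linarith

lemma W_nonneg {p : ℕ → ℝ} (hp : ∀ i, 0 < p i) (f : ℕ → ℝ) (n : ℕ) : 0 ≤ W p f (n + 1) := by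
  have := W_mono hp f (Nat.zero_le n)
  simpa [W_one hp f] using this

lemma const_of_W {p : ℕ → ℝ} (hp : ∀ i, 0 < p i) (f : ℕ → ℝ) (n : ℕ)
    (h : W p f (n + 1) ≤ 0) : ∀ i ≤ n, f i = f 0 := by
  induction n with
  | zero => intro i hi; simp at hi; rw [hi]
  | succ n ih =>
    have h0 := W_succ hp f n
    have h1 := W_nonneg hp f n
    have hc := coef_pos hp n
    have h2 := mul_nonneg hc.le (sq_nonneg (f (n + 1) - S p f (n + 1) / Z p (n + 1)))
    have ih' := ih (by linarith)
    have h3 : p (n + 1) * Z p (n + 1) / Z p (n + 2) *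
        (f (n + 1) - S p f (n + 1) / Z p (n + 1)) ^ 2 = 0 := by linarith
    have h4 : f (n + 1) - S p f (n + 1) / Z p (n + 1) = 0 := by
      rcases mul_eq_zero.1 h3 with h | h
      · exact absurd h hc.ne'
      · exact pow_eq_zero_iff (two_ne_zero) |>.1 h
    have h5 : S p f (n + 1) = f 0 * Z p (n + 1) := by
      unfold S Z
      rw [Finset.mul_sum]
      refine Finset.sum_congr rfl fun i hi => ?_
      rw [ih' i (by simp at hi; omega)]
    have hz := Z_pos hp n
    rw [h5, mul_div_cancel_right₀ _ hz.ne'] at h4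
    intro i hi
    rcases Nat.lt_or_ge i (n + 1) with h | h
    · exact ih' i (by omega)
    · have : i = n + 1 := by omega
      rw [this]; linarith

lemma E_nonneg {v : ℕ → ℝ} (hv : ∀ i, 0 < v i) (f : ℕ → ℝ) (n : ℕ) : 0 ≤ E v f n :=
  Finset.sum_nonneg fun i _ => mul_nonneg (sq_nonneg _) (hv i).le

lemma const_of_E {v : ℕ → ℝ} (hv : ∀ i, 0 < v i) (f : ℕ → ℝ) (n : ℕ)
    (h : E v f n ≤ 0) : ∀ i ≤ n, f i = f 0 := by
  have h0 : E v f n = 0 := le_antisymm h (E_nonneg hv f n)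
  unfold E at h0
  rw [Finset.sum_eq_zero_iff_of_nonneg
    (fun i _ => mul_nonneg (sq_nonneg _) (hv i).le)] at h0
  intro i
  induction i with
  | zero => simp
  | succ i ih =>
    intro hi
    have := h0 i (by simp; omega)
    rcases mul_eq_zero.1 this with h | h
    · have := pow_eq_zero_iff (two_ne_zero) |>.1 h
      rw [← ih (by omega)]; linarith
    · exact absurd h (hv i).ne'

def NC (f : ℕ → ℝ) (m : ℕ) : Prop := ∃ i ≤ m, ∃ j ≤ m, f i ≠ f j

lemma W_pos {p : ℕ → ℝ} (hp : ∀ i, 0 < p i) {f : ℕ → ℝ} {m : ℕ} (h : NC f m) :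
    0 < W p f (m + 1) := by
  by_contra hc
  obtain ⟨i, hi, j, hj, hij⟩ := h
  have := const_of_W hp f m (not_lt.1 hc)
  exact hij (by rw [this i hi, this j hj])

lemma E_pos {v : ℕ → ℝ} (hv : ∀ i, 0 < v i) {f : ℕ → ℝ} {m : ℕ} (h : NC f m) :
    0 < E v f m := by
  by_contra hc
  obtain ⟨i, hi, j, hj, hij⟩ := h
  have := const_of_E hv f m (not_lt.1 hc)
  exact hij (by rw [this i hi, this j hj])

noncomputable def pert (f : ℕ → ℝ) (k : ℕ) (ε : ℝ) : ℕ → ℝ := fun i => if i ≤ k then f i + ε else f i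

lemma S_pert (p f : ℕ → ℝ) (k : ℕ) (ε : ℝ) (n : ℕ) :
    S p (pert f k ε) (k + 1 + n) = S p f (k + 1 + n) + ε * Z p (k + 1) := by
  induction n with
  | zero =>
    simp only [S, Z, add_zero, Finset.mul_sum, ← Finset.sum_add_distrib]
    refine Finset.sum_congr rfl fun i hi => ?_
    have : i ≤ k := by simp at hi; omega
    simp [pert, this]; ring
  | succ n ih =>
    have e (g) : S p g (k + 1 + (n + 1)) = S p g (k + 1 + n) + g (k + 1 + n) * p (k + 1 + n) :=
      Finset.sum_range_succ _ _
    have : ¬ (k + 1 + n ≤ k) := by omega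
    rw [e, e, ih]; simp [pert, this]; ring

lemma Q_pert (p f : ℕ → ℝ) (k : ℕ) (ε : ℝ) (n : ℕ) :
    Q p (pert f k ε) (k + 1 + n) =
      Q p f (k + 1 + n) + 2 * ε * S p f (k + 1) + ε ^ 2 * Z p (k + 1) := by
  induction n with
  | zero =>
    simp only [Q, S, Z, add_zero, Finset.mul_sum, ← Finset.sum_add_distrib]
    refine Finset.sum_congr rfl fun i hi => ?_
    have : i ≤ k := by simp at hi; omega
    simp [pert, this]; ring
  | succ n ih =>
    have e (g) : Q p g (k + 1 + (n + 1)) = Q p g (k + 1 + n) + g (k + 1 + n) ^ 2 * p (k + 1 + n) :=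
      Finset.sum_range_succ _ _
    have : ¬ (k + 1 + n ≤ k) := by omega
    rw [e, e, ih]; simp [pert, this]; ring

lemma E_pert (v f : ℕ → ℝ) (k : ℕ) (ε : ℝ) (n : ℕ) :
    E v (pert f k ε) (k + 1 + n) =
      E v f (k + 1 + n) + (2 * ε * (f k - f (k + 1)) + ε ^ 2) * v k := by
  induction n with
  | zero =>
    have e (g) : E v g (k + 1 + 0) = E v g k + (g k - g (k + 1)) ^ 2 * v k :=
      Finset.sum_range_succ _ _
    have e2 : E v (pert f k ε) k = E v f k := by
      refine Finset.sum_congr rfl fun i hi => ?_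
      have h1 : i ≤ k := by simp at hi; omega
      have h2 : i + 1 ≤ k := by simp at hi; omega
      simp [pert, h1, h2]
    rw [e, e, e2]; simp [pert]; ring
  | succ n ih =>
    have e (g) : E v g (k + 1 + (n + 1)) =
        E v g (k + 1 + n) + (g (k + 1 + n) - g (k + 1 + n + 1)) ^ 2 * v (k + 1 + n) :=
      Finset.sum_range_succ _ _
    have h1 : ¬ (k + 1 + n ≤ k) := by omega
    have h2 : ¬ (k + 1 + n + 1 ≤ k) := by omega
    rw [e, e, ih]; simp [pert, h1, h2]; ring

def FinGap (p v : ℕ → ℝ) (m : ℕ) (g : ℝ) : Prop :=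
  IsLeast {r : ℝ | ∃ f : ℕ → ℝ, NC f m ∧ r = E v f m / W p f (m + 1)} g

lemma FinGap.le {p v : ℕ → ℝ} (hp : ∀ i, 0 < p i) (hv : ∀ i, 0 < v i) {m : ℕ} {g : ℝ}
    (h : FinGap p v m g) (f : ℕ → ℝ) : g * W p f (m + 1) ≤ E v f m := by
  by_cases hf : NC f m
  · have := h.2 ⟨f, hf, rfl⟩
    exact (le_div_iff₀ (W_pos hp hf)).1 this
  · have hc : ∀ i ≤ m, f i = f 0 := by
      intro i hi
      by_contra hne
      exact hf ⟨i, hi, 0, Nat.zero_le _, hne⟩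
    have hW : W p f (m + 1) = 0 := by
      have e1 : S p f (m + 1) = f 0 * Z p (m + 1) := by
        unfold S Z
        rw [Finset.mul_sum]
        refine Finset.sum_congr rfl fun i hi => ?_
        rw [hc i (by simp at hi; omega)]
      have e2 : Q p f (m + 1) = f 0 ^ 2 * Z p (m + 1) := by
        unfold Q Z
        rw [Finset.mul_sum]
        refine Finset.sum_congr rfl fun i hi => ?_
        rw [hc i (by simp at hi; omega)]
      have := Z_pos hp m
      unfold W
      rw [e1, e2]; field_simp; ring
    rw [hW, mul_zero]
    exact E_nonneg hv f m

lemma key {p v : ℕ → ℝ} (hp : ∀ i, 0 < p i) (hv : ∀ i, 0 < v i) {m : ℕ} {g : ℝ}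
    (h : FinGap p v m g) (f : ℕ → ℝ) (hf : E v f m = g * W p f (m + 1)) (k : ℕ) (hk : k < m) :
    (f k - f (k + 1)) * v k =
      g * (S p f (k + 1) - S p f (m + 1) / Z p (m + 1) * Z p (k + 1)) := by
  obtain ⟨n, rfl⟩ := Nat.exists_eq_add_of_le (Nat.succ_le_of_lt hk)
  have hz := Z_pos hp (k + 1 + n)
  set P := Z p (k + 1) with hP
  set Y := Z p (k + 1 + n + 1) with hY
  have H : ∀ ε : ℝ, 0 ≤ (v k - g * (P - P ^ 2 / Y)) * (ε * ε) +
      (2 * ((f k - f (k + 1)) * v k - g * (S p f (k + 1) - S p f (k + 1 + n + 1) / Y * P))) * ε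
      + 0 := by
    intro ε
    have h1 := h.le hp hv (pert f k ε)
    have e : E v (pert f k ε) (k.succ + n) = _ := E_pert v f k ε n
    rw [e] at h1
    unfold W at h1 hf
    have e1 : Q p (pert f k ε) (k.succ + n + 1) = _ := Q_pert p f k ε (n + 1)
    have e2 : S p (pert f k ε) (k.succ + n + 1) = _ := S_pert p f k ε (n + 1)
    rw [e1, e2] at h1
    change E v f (k + 1 + n) = g * (Q p f (k + 1 + n + 1) - S p f (k + 1 + n + 1) ^ 2 / Y) at hf
    change g * (Q p f (k + 1 + n + 1) + 2 * ε * S p f (k + 1) + ε ^ 2 * P -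
      (S p f (k + 1 + n + 1) + ε * P) ^ 2 / Y) ≤ _ at h1
    rw [hf, ← sub_nonneg] at h1
    convert h1 using 1
    field_simp
    ring
  have := discrim_le_zero H
  unfold discrim at this
  have h0 : ((f k - f (k + 1)) * v k - g * (S p f (k + 1) - S p f (k + 1 + n + 1) / Y * P)) ^ 2 = 0 := by
    refine le_antisymm ?_ (sq_nonneg _)
    nlinarith
  have := pow_eq_zero_iff (two_ne_zero) |>.1 h0
  exact sub_eq_zero.1 this

lemma last_ne {p v : ℕ → ℝ} (hp : ∀ i, 0 < p i) (hv : ∀ i, 0 < v i) {m : ℕ} {g : ℝ}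
    (h : FinGap p v m g) (f : ℕ → ℝ) (hf : E v f m = g * W p f (m + 1)) (hnc : NC f m) :
    f m ≠ S p f (m + 1) / Z p (m + 1) := by
  intro hm
  have hz := Z_pos hp m
  set μ := S p f (m + 1) / Z p (m + 1) with hμ
  have hS : S p f (m + 1) = μ * Z p (m + 1) := by rw [hμ]; field_simp
  -- partial sums: downward induction
  have claim : ∀ j ≤ m, f (m - j) = μ ∧ S p f (m - j + 1) = μ * Z p (m - j + 1) := by
    intro j
    induction j with
    | zero => intro _; exact ⟨hm, hS⟩
    | succ j ih =>
      intro hj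
      obtain ⟨h1, h2⟩ := ih (by omega)
      obtain ⟨k, hk⟩ : ∃ k, m - (j + 1) = k := ⟨_, rfl⟩
      have hk' : m - j = k + 1 := by omega
      rw [hk'] at h1 h2
      rw [hk]
      have e1 : S p f (k + 1 + 1) = S p f (k + 1) + f (k + 1) * p (k + 1) :=
        Finset.sum_range_succ _ _
      have e2 : Z p (k + 1 + 1) = Z p (k + 1) + p (k + 1) := Finset.sum_range_succ _ _
      have h3 : S p f (k + 1) = μ * Z p (k + 1) := by
        rw [e1, e2, h1] at h2; linarith
      refine ⟨?_, h3⟩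
      have h4 := key hp hv h f hf k (by omega)
      rw [← hμ, h3, sub_self, mul_zero] at h4
      rcases mul_eq_zero.1 h4 with h5 | h5
      · linarith
      · exact absurd h5 (hv k).ne'
  obtain ⟨i, hi, j, hj, hij⟩ := hnc
  apply hij
  have a := (claim (m - i) (by omega)).1
  have b := (claim (m - j) (by omega)).1
  rw [show m - (m - i) = i by omega] at a
  rw [show m - (m - j) = j by omega] at b
  rw [a, b]

lemma strict {p v : ℕ → ℝ} (hp : ∀ i, 0 < p i) (hv : ∀ i, 0 < v i) {m : ℕ} {g g' : ℝ}
    (h : FinGap p v m g) (h' : FinGap p v (m + 1) g') : g' < g := by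
  obtain ⟨f, hnc, hg⟩ := h.1
  have hW := W_pos hp hnc
  have hE := E_pos hv hnc
  have hf : E v f m = g * W p f (m + 1) := by rw [hg]; field_simp
  have hne := last_ne hp hv h f hf hnc
  set F : ℕ → ℝ := fun i => if i ≤ m then f i else f m with hF
  have hFi : ∀ i ≤ m, F i = f i := fun i hi => by simp [hF, hi]
  have hFm : F (m + 1) = f m := by simp [hF]
  have eS : S p F (m + 1) = S p f (m + 1) :=
    Finset.sum_congr rfl fun i hi => by rw [hFi i (by simp at hi; omega)]
  have eQ : Q p F (m + 1) = Q p f (m + 1) :=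
    Finset.sum_congr rfl fun i hi => by rw [hFi i (by simp at hi; omega)]
  have eW : W p F (m + 1) = W p f (m + 1) := by unfold W; rw [eS, eQ]
  have eE0 : E v F m = E v f m :=
    Finset.sum_congr rfl fun i hi => by
      rw [hFi i (by simp at hi; omega), hFi (i + 1) (by simp at hi; omega)]
  have eE : E v F (m + 1) = E v f m := by
    have : E v F (m + 1) = E v F m + (F m - F (m + 1)) ^ 2 * v m := Finset.sum_range_succ _ _
    rw [this, eE0, hFm, hFi m le_rfl]; ring
  have eW2 := W_succ hp F m
  rw [eW, eS, hFm] at eW2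
  have hlt : W p f (m + 1) < W p F (m + 2) := by
    rw [eW2]
    have := mul_pos (coef_pos hp m) (pow_pos (abs_pos.2 (sub_ne_zero.2 hne)) 2)
    rw [sq_abs] at this
    linarith
  have h1 : g' ≤ E v F (m + 1) / W p F (m + 1 + 1) := by
    refine h'.2 ⟨F, ?_, rfl⟩
    obtain ⟨i, hi, j, hj, hij⟩ := hnc
    exact ⟨i, by omega, j, by omega, by rwa [hFi i hi, hFi j hj]⟩
  refine h1.trans_lt ?_
  rw [hg, eE]
  exact div_lt_div_of_pos_left hE hW hlt

lemma W_tendsto {p f : ℕ → ℝ} (hp : ∀ i, 0 < p i) (hs : Summable p) (h1 : ∑' i, p i = 1)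
    (hf : Summable fun i => f i ^ 2 * p i) :
    Filter.Tendsto (fun n => W p f (n + 1)) Filter.atTop
      (nhds ((∑' i, f i ^ 2 * p i) - (∑' i, f i * p i) ^ 2)) := by
  have hfs : Summable fun i => f i * p i := by
    refine Summable.of_norm_bounded (hf.add hs) fun i => ?_
    rw [Real.norm_eq_abs, abs_mul, abs_of_pos (hp i)]
    have : |f i| ≤ f i ^ 2 + 1 := by
      rw [← sq_abs]; nlinarith [sq_nonneg (|f i| - 1), abs_nonneg (f i)]
    nlinarith [hp i]
  have a := hs.hasSum.tendsto_sum_nat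
  have b := hf.hasSum.tendsto_sum_nat
  have c := hfs.hasSum.tendsto_sum_nat
  rw [h1] at a
  have d := b.sub ((c.pow 2).div a one_ne_zero)
  rw [div_one] at d
  exact d.comp (Filter.tendsto_add_atTop_nat 1)

lemma conv {p v : ℕ → ℝ} (hp : ∀ i, 0 < p i) (hv : ∀ i, 0 < v i)
    (hs : Summable p) (h1 : ∑' i, p i = 1) {G : ℝ}
    (hG : IsGLB {r : ℝ | ∃ f : ℕ → ℝ, (∃ i j, f i ≠ f j) ∧
      (Summable fun i => f i ^ 2 * p i) ∧ (Summable fun i => (f i - f (i + 1)) ^ 2 * v i) ∧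
      r = (∑' i, (f i - f (i + 1)) ^ 2 * v i) /
        ((∑' i, f i ^ 2 * p i) - (∑' i, f i * p i) ^ 2)} G)
    (g : ℕ → ℝ) (hg : ∀ m, 1 ≤ m → FinGap p v m (g m)) :
    Filter.Tendsto g Filter.atTop (nhds G) := by
  have lower : ∀ m, 1 ≤ m → G ≤ g m := by
    intro m hm
    obtain ⟨f, hnc, hgm⟩ := (hg m hm).1
    have hW := W_pos hp hnc
    have hE := E_pos hv hnc
    set F : ℕ → ℝ := fun i => if i ≤ m then f i else f m with hF
    have hFi : ∀ i ≤ m, F i = f i := fun i hi => by simp [hF, hi]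
    have hFm : ∀ i, m ≤ i → F i = f m := fun i hi => by
      rcases hi.eq_or_lt with h | h
      · rw [← h]; exact hFi m le_rfl
      · simp [hF, not_le.2 h]
    have eS : S p F (m + 1) = S p f (m + 1) :=
      Finset.sum_congr rfl fun i hi => by rw [hFi i (by simp at hi; omega)]
    have eQ : Q p F (m + 1) = Q p f (m + 1) :=
      Finset.sum_congr rfl fun i hi => by rw [hFi i (by simp at hi; omega)]
    have eW : W p F (m + 1) = W p f (m + 1) := by unfold W; rw [eS, eQ]
    have eE0 : E v F m = E v f m :=
      Finset.sum_congr rfl fun i hi => by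
        rw [hFi i (by simp at hi; omega), hFi (i + 1) (by simp at hi; omega)]
    have hz : ∀ i ∉ range m, (F i - F (i + 1)) ^ 2 * v i = 0 := by
      intro i hi
      simp at hi
      rw [hFm i hi, hFm (i + 1) (by omega)]; ring
    have hsumE : Summable fun i => (F i - F (i + 1)) ^ 2 * v i :=
      summable_of_ne_finset_zero hz
    have htE : ∑' i, (F i - F (i + 1)) ^ 2 * v i = E v f m := by
      rw [tsum_eq_sum hz]; exact eE0
    have hsumQ : Summable fun i => F i ^ 2 * p i := by
      rw [← summable_nat_add_iff m]
      have : (fun i => F (i + m) ^ 2 * p (i + m)) = fun i => f m ^ 2 * p (i + m) := by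
        funext i; rw [hFm _ (by omega)]
      rw [this]
      exact ((summable_nat_add_iff m).2 hs).mul_left _
    have hle : W p f (m + 1) ≤ (∑' i, F i ^ 2 * p i) - (∑' i, F i * p i) ^ 2 := by
      rw [← eW]
      exact (W_mono hp F).ge_of_tendsto (W_tendsto hp hs h1 hsumQ) m
    have hr := hG.1 ⟨F, (by
      obtain ⟨i, hi, j, hj, hij⟩ := hnc
      exact ⟨i, j, by rwa [hFi i hi, hFi j hj]⟩), hsumQ, hsumE, rfl⟩
    refine hr.trans ?_
    rw [hgm, htE]
    exact div_le_div_of_nonneg_left hE.le hW hle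
  rw [tendsto_order]
  refine ⟨fun a ha => ?_, fun a ha => ?_⟩
  · filter_upwards [Filter.eventually_ge_atTop 1] with m hm
    exact ha.trans_le (lower m hm)
  · obtain ⟨r, ⟨f, ⟨i, j, hij⟩, hQ, hE, rfl⟩, -, hra⟩ := hG.exists_between ha
    have tW := W_tendsto hp hs h1 hQ
    have tE : Filter.Tendsto (fun n => E v f n) Filter.atTop _ := hE.hasSum.tendsto_sum_nat
    have nc : ∀ m, max i j ≤ m → NC f m := fun m hm =>
      ⟨i, (le_max_left _ _).trans hm, j, (le_max_right _ _).trans hm, hij⟩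
    have hpos : 0 < (∑' i, f i ^ 2 * p i) - (∑' i, f i * p i) ^ 2 :=
      (W_pos hp (nc _ le_rfl)).trans_le ((W_mono hp f).ge_of_tendsto tW (max i j))
    have t := tE.div tW hpos.ne'
    filter_upwards [Filter.eventually_ge_atTop 1, Filter.eventually_ge_atTop (max i j),
      t.eventually_lt_const hra] with m hm1 hm2 hm3
    exact ((hg m hm1).2 ⟨f, nc m hm2, rfl⟩).trans_lt hm3

lemma sum_Icc (a : ℕ → ℝ) (n : ℕ) : ∑ i ∈ Finset.Icc 1 n, a i = ∑ i ∈ range n, a (i + 1) := by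
  rw [Finset.range_eq_Ico, Finset.sum_Ico_add' a 0 n 1]
  rfl

lemma quot_eq {p : ℕ → ℝ} (hp : ∀ i, 0 < p i) (v f : ℕ → ℝ) (m : ℕ) :
    (∑ i ∈ range m, (f i - f (i + 1)) ^ 2 * ((Z p (m + 1))⁻¹ * v i)) /
      ((∑ i ∈ range (m + 1), f i ^ 2 * ((Z p (m + 1))⁻¹ * p i)) -
        (∑ i ∈ range (m + 1), f i * ((Z p (m + 1))⁻¹ * p i)) ^ 2) =
    E v f m / W p f (m + 1) := by
  have hz := Z_pos hp m
  have e1 : (∑ i ∈ range m, (f i - f (i + 1)) ^ 2 * ((Z p (m + 1))⁻¹ * v i)) =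
      (Z p (m + 1))⁻¹ * E v f m := by
    unfold E; rw [Finset.mul_sum]; exact Finset.sum_congr rfl fun i _ => by ring
  have e2 : (∑ i ∈ range (m + 1), f i ^ 2 * ((Z p (m + 1))⁻¹ * p i)) =
      (Z p (m + 1))⁻¹ * Q p f (m + 1) := by
    unfold Q; rw [Finset.mul_sum]; exact Finset.sum_congr rfl fun i _ => by ring
  have e3 : (∑ i ∈ range (m + 1), f i * ((Z p (m + 1))⁻¹ * p i)) =
      (Z p (m + 1))⁻¹ * S p f (m + 1) := by
    unfold S; rw [Finset.mul_sum]; exact Finset.sum_congr rfl fun i _ => by ring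
  rw [e1, e2, e3]
  have e4 : (Z p (m + 1))⁻¹ * Q p f (m + 1) - ((Z p (m + 1))⁻¹ * S p f (m + 1)) ^ 2 =
      (Z p (m + 1))⁻¹ * W p f (m + 1) := by
    unfold W; field_simp
  rw [e4, mul_div_mul_left _ _ (inv_ne_zero hz.ne')]

end Gap

theorem stmt19 (π ν : ℕ → ℝ)
    (hπ : ∀ i, 1 ≤ i → 0 < π i) (hν : ∀ i, 1 ≤ i → 0 < ν i)
    (hπsum : Summable fun i : ℕ => π (i + 1))
    (hπ1 : ∑' i : ℕ, π (i + 1) = 1)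
    -- the spectral gap of the infinite path: the infimum of the Rayleigh quotients
    -- over non-constant `f` with `π(f²) < ∞` (and convergent Dirichlet sum)
    (gapInf : ℝ)
    (hgapInf : IsGLB {r : ℝ | ∃ f : ℕ → ℝ,
      (∃ i j : ℕ, 1 ≤ i ∧ 1 ≤ j ∧ f i ≠ f j) ∧
      (Summable fun i : ℕ => (f (i + 1)) ^ 2 * π (i + 1)) ∧
      (Summable fun i : ℕ => (f (i + 1) - f (i + 2)) ^ 2 * ν (i + 1)) ∧
      r = (∑' i : ℕ, (f (i + 1) - f (i + 2)) ^ 2 * ν (i + 1)) /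
          ((∑' i : ℕ, (f (i + 1)) ^ 2 * π (i + 1)) -
            (∑' i : ℕ, f (i + 1) * π (i + 1)) ^ 2)} gapInf)
    -- the spectral gaps of the finite subpaths `G_n` with the normalized
    -- restrictions `π_n = c_n π`, `ν_n = c_n ν`, `c_n = 1/(π(1)+⋯+π(n))`
    (gapFin : ℕ → ℝ)
    (hgapFin : ∀ n, 2 ≤ n → IsLeast {r : ℝ | ∃ f : ℕ → ℝ,
      (∃ i ∈ Finset.Icc 1 n, ∃ j ∈ Finset.Icc 1 n, f i ≠ f j) ∧
      r = (∑ i ∈ Finset.Icc 1 (n - 1),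
            (f i - f (i + 1)) ^ 2 * ((∑ l ∈ Finset.Icc 1 n, π l)⁻¹ * ν i)) /
          ((∑ i ∈ Finset.Icc 1 n,
            (f i) ^ 2 * ((∑ l ∈ Finset.Icc 1 n, π l)⁻¹ * π i)) -
           (∑ i ∈ Finset.Icc 1 n,
            f i * ((∑ l ∈ Finset.Icc 1 n, π l)⁻¹ * π i)) ^ 2)} (gapFin n)) :
    (∀ n, 2 ≤ n → gapFin (n + 1) < gapFin n) ∧
    Filter.Tendsto gapFin Filter.atTop (nhds gapInf) := by
  have hp : ∀ i, 0 < (fun i => π (i + 1)) i := fun i => hπ _ (by omega)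
  have hv : ∀ i, 0 < (fun i => ν (i + 1)) i := fun i => hν _ (by omega)
  have hfin : ∀ m, 1 ≤ m →
      Gap.FinGap (fun i => π (i + 1)) (fun i => ν (i + 1)) m (gapFin (m + 1)) := by
    intro m hm
    have h := hgapFin (m + 1) (by omega)
    unfold Gap.FinGap
    convert h using 1
    ext r
    constructor
    · rintro ⟨f, ⟨i, hi, j, hj, hij⟩, rfl⟩
      refine ⟨fun i => f (i - 1), ⟨i + 1, by simp; omega, j + 1, by simp; omega, by simpa using hij⟩, ?_⟩
      rw [← Gap.quot_eq hp]
      simp only [Gap.sum_Icc, Nat.add_sub_cancel]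
      rfl
    · rintro ⟨f, ⟨i, hi, j, hj, hij⟩, rfl⟩
      simp only [Finset.mem_Icc] at hi hj
      refine ⟨fun i => f (i + 1), ⟨i - 1, by omega, j - 1, by omega, ?_⟩, ?_⟩
      · simp only [Nat.sub_add_cancel hi.1, Nat.sub_add_cancel hj.1]; exact hij
      rw [← Gap.quot_eq hp]
      simp only [Gap.sum_Icc, Nat.add_sub_cancel]
      rfl
  refine ⟨fun n hn => ?_, ?_⟩
  · obtain ⟨m, rfl⟩ : ∃ m, n = m + 1 := ⟨n - 1, by omega⟩
    exact Gap.strict hp hv (hfin m (by omega)) (hfin (m + 1) (by omega))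
  · rw [← Filter.tendsto_add_atTop_iff_nat 1]
    refine Gap.conv hp hv hπsum hπ1 ?_ _ hfin
    convert hgapInf using 1
    ext r
    constructor
    · rintro ⟨f, ⟨i, j, hij⟩, hQ, hE, rfl⟩
      exact ⟨fun i => f (i - 1), ⟨i + 1, j + 1, by omega, by omega, by simpa using hij⟩, hQ, hE, rfl⟩
    · rintro ⟨f, ⟨i, j, hi, hj, hij⟩, hQ, hE, rfl⟩
      refine ⟨fun i => f (i + 1), ⟨i - 1, j - 1, ?_⟩, hQ, hE, rfl⟩
      simp only [Nat.sub_add_cancel hi, Nat.sub_add_cancel hj]; exact hij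
end
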